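/- Let F be a field of characteristic not 2 and let x, y, z ∈ F with z ≠ 0. In M₂(F) set A = [[2, 0],[x, 2]] and B = [[y, z],[(xyz − 2y² − 2)/(2z), (xz − 2y)/2]]. Then det B = 1, tr A = det A, A·adj(B) + B·adj(A) = 0 (where adj denotes the adjugate matrix), the matrices A, A − I and B are invertible, and A, B satisfy the fundamental equation A⁻¹B⁻¹AB − BA⁻¹B⁻¹A = B⁻¹AB − A. -/

import Mathlib

/-!
The fundamental equation holds for every matching pair with `det A` invertible and `det B = 1`;
the explicit matrices only have to be checked to form such a pair.

Since `tr A = det A = d`, the adjugate is `adj A = d - A`, so `A⁻¹ = 1 - d⁻¹ A`. Substituting this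
for `A⁻¹` cancels `B⁻¹AB - A` on both sides and reduces the equation to `A B⁻¹ A B = B A B⁻¹ A`.
The matching condition `A (adj B) = -B (adj A)` and its mirror image `(adj B) A = -(adj A) B`
(`adjugate_polarization`) turn both sides into `-d B²`.
-/

/-- Both sides equal the scalar matrix given by the polarization of the determinant at `(A, B)`. -/
lemma adjugate_polarization {R : Type*} [CommRing R] (A B : Matrix (Fin 2) (Fin 2) R) :
    B.adjugate * A + A.adjugate * B = A * B.adjugate + B * A.adjugate := by
  ext i j
  fin_cases i <;> fin_cases j <;>
    simp [Matrix.adjugate_fin_two, Matrix.mul_apply, Matrix.vecMul, dotProduct,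
      Fin.sum_univ_two] <;> ring

/-- The Cayley–Hamilton theorem for `2 × 2` matrices, in adjugate form. -/
lemma adjugate_eq_trace_smul_sub {R : Type*} [CommRing R] (A : Matrix (Fin 2) (Fin 2) R) :
    A.adjugate = A.trace • (1 : Matrix (Fin 2) (Fin 2) R) - A := by
  ext i j
  fin_cases i <;> fin_cases j <;>
    simp [Matrix.adjugate_fin_two, Matrix.trace_fin_two]

lemma fundamental_of_matching {F : Type*} [Field F] (A B : Matrix (Fin 2) (Fin 2) F)
    (hA : A.det ≠ 0) (hB : B.det = 1) (htr : A.trace = A.det)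
    (h : A * B.adjugate + B * A.adjugate = 0) :
    A⁻¹ * B⁻¹ * A * B - B * A⁻¹ * B⁻¹ * A = B⁻¹ * A * B - A := by
  have hBi : B⁻¹ = B.adjugate := by simp [Matrix.inv_def, hB]
  have hBB : B * B⁻¹ = 1 := Matrix.mul_nonsing_inv B (by simp [hB])
  have hAi : A⁻¹ = 1 - A.det⁻¹ • A := by
    rw [Matrix.inv_def, adjugate_eq_trace_smul_sub, htr, Ring.inverse_eq_inv', smul_sub, smul_smul,
      inv_mul_cancel₀ hA, one_smul]
  have h1 : A * B⁻¹ = -(B * A.adjugate) := by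
    rw [hBi]; exact eq_neg_of_add_eq_zero_left h
  have h2 : B⁻¹ * A = -(A.adjugate * B) := by
    rw [hBi]; exact eq_neg_of_add_eq_zero_left ((adjugate_polarization A B).trans h)
  have h3 : A * B⁻¹ * A * B = B * A * (B⁻¹ * A) := by
    rw [h1, h2]
    calc -(B * A.adjugate) * A * B = -(B * (A.adjugate * A) * B) := by noncomm_ring
      _ = -(B * (A * A.adjugate) * B) := by rw [Matrix.adjugate_mul, Matrix.mul_adjugate]
      _ = B * A * -(A.adjugate * B) := by noncomm_ring
  have h4 : B * A * B⁻¹ * A = A * B⁻¹ * A * B := by rw [h3, ← mul_assoc]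
  rw [hAi]
  simp only [sub_mul, mul_sub, one_mul, mul_one, Matrix.smul_mul, Matrix.mul_smul, hBB, h4]
  abel

/-- The general matching pair with `A` having one eigenvalue (case 2):
`A = [[2,0],[x,2]]`, `B = [[y,z],[(xyz−2y²−2)/(2z), (xz−2y)/2]]` is a matching pair,
`A`, `A − 1`, `B` are invertible and `A, B` satisfy the fundamental equation. -/
theorem matching_pair_case_one_eigenvalue {F : Type*} [Field F] (h2 : (2 : F) ≠ 0)
    (x y z : F) (hz : z ≠ 0)
    (A B : Matrix (Fin 2) (Fin 2) F)
    (hA : A = !![2, 0; x, 2])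
    (hB : B = !![y, z; (x * y * z - 2 * y ^ 2 - 2) / (2 * z), (x * z - 2 * y) / 2]) :
    B.det = 1 ∧
      A.trace = A.det ∧
      A * B.adjugate + B * A.adjugate = 0 ∧
      IsUnit A ∧ IsUnit (A - 1) ∧ IsUnit B ∧
      A⁻¹ * B⁻¹ * A * B - B * A⁻¹ * B⁻¹ * A = B⁻¹ * A * B - A := by
  have hdB : B.det = 1 := by
    rw [hB, Matrix.det_fin_two_of]; field_simp; ring
  have hdA : A.det = 2 * 2 := by
    rw [hA, Matrix.det_fin_two_of]; ring
  have hA0 : A.det ≠ 0 := by rw [hdA]; exact mul_ne_zero h2 h2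
  have htr : A.trace = A.det := by
    rw [hdA, hA, Matrix.trace_fin_two_of]; ring
  have hdA1 : (A - 1).det = 1 := by
    rw [hA, Matrix.det_fin_two]; simp; ring
  have hm : A * B.adjugate + B * A.adjugate = 0 := by
    rw [hA, hB]
    ext i j
    fin_cases i <;> fin_cases j <;>
      simp [Matrix.adjugate_fin_two] <;> field_simp <;> ring
  refine ⟨hdB, htr, hm, ?_, ?_, ?_, fundamental_of_matching A B hA0 hdB htr hm⟩
  · exact (Matrix.isUnit_iff_isUnit_det A).2 hA0.isUnit
  · exact (Matrix.isUnit_iff_isUnit_det _).2 (by simp [hdA1])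
  · exact (Matrix.isUnit_iff_isUnit_det B).2 (by simp [hdB])
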